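/- Uniform off-diagonal bound: in the stationary conductance model on ℤ with 1/c integrable, for μ-a.e. ω the sequence √(2n)·max_{x∈B(0,√(2n))∩2ℤ} (P_0^ω[S_{2n}=x]/c̄(x)) is bounded in n; and if additionally ∫c̄ dμ = +∞, this sequence converges to 0. -/

import Mathlib

open MeasureTheory Filter
open scoped BigOperators ENNReal

/-- `cbar κ x = c(x−1,x) + c(x,x+1)`, where `κ x` denotes the conductance of
the edge `{x, x+1}` of `ℤ`. -/
noncomputable def cbar (κ : ℤ → ℝ) (x : ℤ) : ℝ := κ (x - 1) + κ x

/-- One-step transition probabilities of the nearest-neighbour conductance walk. -/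
noncomputable def step (κ : ℤ → ℝ) (x y : ℤ) : ℝ :=
  if y = x + 1 then κ x / cbar κ x
  else if y = x - 1 then κ (x - 1) / cbar κ x else 0

/-- `walk κ n x y = P_x[S_n = y]`, the `n`-step transition probabilities. -/
noncomputable def walk (κ : ℤ → ℝ) : ℕ → ℤ → ℤ → ℝ
  | 0, x, y => if y = x then 1 else 0
  | (n+1), x, y =>
      walk κ n x (y - 1) * step κ (y - 1) y + walk κ n x (y + 1) * step κ (y + 1) y

/-- The heat kernel `h_n(x) = P_0[S_n = x] / c̄(x)`. -/
noncomputable def heatK (κ : ℤ → ℝ) (n : ℕ) (x : ℤ) : ℝ := walk κ n 0 x / cbar κ x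

/-- The energy `‖h_n‖² = Σ_x h_n(x)² c̄(x)`. -/
noncomputable def energy (κ : ℤ → ℝ) (n : ℕ) : ℝ :=
  ∑' x : ℤ, (heatK κ n x) ^ 2 * cbar κ x

/-- The stationary environment of conductances seen from `ω`:
`c(x,x+1)(ω) = c(Tˣ ω)`. -/
noncomputable def envC {Ω : Type*} (T : Equiv.Perm Ω) (c : Ω → ℝ) (ω : Ω) : ℤ → ℝ :=
  fun x => c ((T ^ x) ω)

/-!
Write `P` for the transition operator, which is self-adjoint for the weight `c̄`, so that
`‖h_n‖² = h_{2n}(0)`. The sequence `n ↦ ‖h_n‖²` is convex, because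
`‖h_n‖² - 2‖h_{n+1}‖² + ‖h_{n+2}‖² = ‖h_n - h_{n+2}‖²`, and its decrements are the Dirichlet
energies of the `h_n` for the two-step walk. Hence `n` times the energy of `h_{2n}` is at most
`h_{2n}(0)`. By Cauchy–Schwarz, `|h_{2n}(x) - h_{2n}(0)|²` is at most the resistance between `0`
and `x` times this energy, so `h_{2n}` varies little at the scale `√n` if resistances grow linearly.
Conservation of mass then forces `h_{2n}(0)` to be of order `1/√n`, and of smaller order if the
total conductance of an interval grows superlinearly in its length. Both growth conditions hold
almost surely, by Garsia's maximal ergodic theorem applied to `1/c` and to truncations of `c`.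
-/

section TransitionOperator

variable {κ f g : ℤ → ℝ}

lemma cbar_pos (hκ : ∀ x, 0 < κ x) (x : ℤ) : 0 < cbar κ x := add_pos (hκ _) (hκ _)

lemma cbar_ne_zero (hκ : ∀ x, 0 < κ x) (x : ℤ) : cbar κ x ≠ 0 := (cbar_pos hκ x).ne'

/-- The transition operator `(P f)(x) = E_x[f(S_1)]` of the walk with conductances `κ`. -/
noncomputable def transitionOp (κ f : ℤ → ℝ) (x : ℤ) : ℝ :=
  (κ (x - 1) * f (x - 1) + κ x * f (x + 1)) / cbar κ x

/-- The inner product `⟨f, g⟩ = Σ_x f(x) g(x) c̄(x)` of `ℓ²(ℤ, c̄)`, for which the transition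
operator is self-adjoint. It is used only when one of `f` and `g` has finite support, so that the
sum converges. -/
noncomputable def weightedInner (κ f g : ℤ → ℝ) : ℝ := ∑' x, f x * g x * cbar κ x

/-- The conductance `(1 / κ(x-1) + 1 / κ(x))⁻¹` of the edges `{x-1, x}` and `{x, x+1}` in series. -/
noncomputable def seriesConductance (κ : ℤ → ℝ) (x : ℤ) : ℝ := κ (x - 1) * κ x / cbar κ x

/-- The Dirichlet form `⟨f, (1 - P²) f⟩` of the two-step walk. The steps of `S_{2n}` that keep the
walk in place do not contribute, and the others join `x - 1` to `x + 1` through `x`. -/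
noncomputable def dirichletForm (κ f : ℤ → ℝ) : ℝ :=
  ∑' x, seriesConductance κ x * (f (x + 1) - f (x - 1)) ^ 2

lemma transitionOp_hasFiniteSupport (hf : f.HasFiniteSupport) :
    (transitionOp κ f).HasFiniteSupport := by
  unfold transitionOp
  simp only [div_eq_mul_inv]
  fun_prop (disch := simp [Function.Injective])

lemma transitionOp_mul_cbar {x : ℤ} (hκ : cbar κ x ≠ 0) :
    transitionOp κ f x * cbar κ x = κ (x - 1) * f (x - 1) + κ x * f (x + 1) :=
  div_mul_cancel₀ _ hκ

lemma transitionOp_one (hκ : ∀ x, cbar κ x ≠ 0) : transitionOp κ 1 = 1 := by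
  ext x
  simpa [transitionOp, cbar] using div_self (hκ x)

lemma transitionOp_nonneg (hκ : ∀ x, 0 ≤ κ x) (hf : 0 ≤ f) : 0 ≤ transitionOp κ f := fun _ =>
  div_nonneg (add_nonneg (mul_nonneg (hκ _) (hf _)) (mul_nonneg (hκ _) (hf _)))
    (add_nonneg (hκ _) (hκ _))

lemma weightedInner_transitionOp_left (hκ : ∀ x, cbar κ x ≠ 0) (hf : f.HasFiniteSupport) :
    weightedInner κ (transitionOp κ f) g = weightedInner κ f (transitionOp κ g) := by
  calc weightedInner κ (transitionOp κ f) g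
      = ∑' x, (κ (x - 1) * f (x - 1) * g x + κ x * f (x + 1) * g x) :=
        tsum_congr fun x => by linear_combination g x * transitionOp_mul_cbar (f := f) (hκ x)
    _ = ∑' x, κ (x - 1) * f (x - 1) * g x + ∑' x, κ x * f (x + 1) * g x :=
        Summable.tsum_add
          (summable_of_hasFiniteSupport (by fun_prop (disch := simp [Function.Injective])))
          (summable_of_hasFiniteSupport (by fun_prop (disch := simp [Function.Injective])))
    _ = ∑' x, κ x * f x * g (x + 1) + ∑' x, κ (x - 1) * f x * g (x - 1) := by
        rw [← (Equiv.addRight (1 : ℤ)).tsum_eq, ← (Equiv.subRight (1 : ℤ)).tsum_eq fun x =>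
          κ x * f (x + 1) * g x]
        simp
    _ = ∑' x, (κ x * f x * g (x + 1) + κ (x - 1) * f x * g (x - 1)) :=
        (Summable.tsum_add (summable_of_hasFiniteSupport (by fun_prop))
          (summable_of_hasFiniteSupport (by fun_prop))).symm
    _ = weightedInner κ f (transitionOp κ g) :=
        tsum_congr fun x => by linear_combination -f x * transitionOp_mul_cbar (f := g) (hκ x)

lemma weightedInner_transitionOp_one (hκ : ∀ x, cbar κ x ≠ 0) (hf : f.HasFiniteSupport) :
    weightedInner κ (transitionOp κ f) 1 = weightedInner κ f 1 := by
  rw [weightedInner_transitionOp_left hκ hf, transitionOp_one hκ]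

lemma weightedInner_sub_self (hf : f.HasFiniteSupport) (hg : g.HasFiniteSupport) :
    weightedInner κ (f - g) (f - g) =
      weightedInner κ f f - 2 * weightedInner κ f g + weightedInner κ g g := by
  simp only [weightedInner, Pi.sub_apply, ← tsum_mul_left]
  rw [← Summable.tsum_sub, ← Summable.tsum_add]
  · exact tsum_congr fun x => by ring
  all_goals exact summable_of_hasFiniteSupport (by fun_prop)

lemma weightedInner_self_nonneg (hκ : ∀ x, 0 ≤ cbar κ x) : 0 ≤ weightedInner κ f f :=
  tsum_nonneg fun x => mul_nonneg (mul_self_nonneg _) (hκ x)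

lemma seriesConductance_pos (hκ : ∀ x, 0 < κ x) (x : ℤ) : 0 < seriesConductance κ x :=
  div_pos (mul_pos (hκ _) (hκ _)) (cbar_pos hκ x)

lemma one_div_seriesConductance (hκ : ∀ x, 0 < κ x) (x : ℤ) :
    1 / seriesConductance κ x = 1 / κ (x - 1) + 1 / κ x := by
  rw [seriesConductance, cbar, one_div_div, one_div_add_one_div (hκ _).ne' (hκ _).ne', add_comm]

lemma dirichletForm_nonneg (hκ : ∀ x, 0 < κ x) : 0 ≤ dirichletForm κ f :=
  tsum_nonneg fun x => mul_nonneg (seriesConductance_pos hκ x).le (sq_nonneg _)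

lemma summable_dirichletForm (hf : f.HasFiniteSupport) :
    Summable fun x => seriesConductance κ x * (f (x + 1) - f (x - 1)) ^ 2 := by
  simp only [sq]
  exact summable_of_hasFiniteSupport (by fun_prop (disch := simp [Function.Injective]))

lemma transitionOp_sq_mul_cbar_sub {x : ℤ} (hκ : cbar κ x ≠ 0) :
    transitionOp κ (f * f) x * cbar κ x - transitionOp κ f x * transitionOp κ f x * cbar κ x =
      seriesConductance κ x * (f (x + 1) - f (x - 1)) ^ 2 := by
  simp only [transitionOp, seriesConductance, Pi.mul_apply]
  field_simp
  simp only [cbar]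
  ring

lemma dirichletForm_eq_weightedInner_sub (hκ : ∀ x, cbar κ x ≠ 0) (hf : f.HasFiniteSupport) :
    dirichletForm κ f =
      weightedInner κ f f - weightedInner κ (transitionOp κ f) (transitionOp κ f) := by
  have hPf := transitionOp_hasFiniteSupport (κ := κ) hf
  have hPff := transitionOp_hasFiniteSupport (κ := κ) (f := f * f) (by fun_prop)
  have hff : weightedInner κ f f = ∑' x, transitionOp κ (f * f) x * cbar κ x := by
    simpa [weightedInner] using (weightedInner_transitionOp_one hκ (f := f * f) (by fun_prop)).symm
  rw [hff, weightedInner, ← Summable.tsum_sub]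
  · exact tsum_congr fun x => (transitionOp_sq_mul_cbar_sub (hκ x)).symm
  all_goals exact summable_of_hasFiniteSupport (by fun_prop)

end TransitionOperator

section HeatKernel

variable {κ : ℤ → ℝ}

lemma heatK_zero (κ : ℤ → ℝ) : heatK κ 0 = Pi.single 0 (1 / cbar κ 0) := by
  ext x
  rcases eq_or_ne x 0 with rfl | hx
  · simp [heatK, walk]
  · simp [heatK, walk, hx]

lemma heatK_succ (κ : ℤ → ℝ) (n : ℕ) : heatK κ (n + 1) = transitionOp κ (heatK κ n) := by
  ext x
  have hl : step κ (x - 1) x = κ (x - 1) / cbar κ (x - 1) := by simp [step]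
  have hr : step κ (x + 1) x = κ x / cbar κ (x + 1) := by
    have hne : x ≠ x + 1 + 1 := by lia
    simp [step, hne]
  rw [transitionOp, heatK, walk, hl, hr, heatK, heatK]
  ring

lemma heatK_nonneg (hκ : ∀ x, 0 ≤ κ x) (n : ℕ) : 0 ≤ heatK κ n := by
  induction n with
  | zero =>
    rw [heatK_zero]
    exact Pi.single_nonneg.2 (one_div_nonneg.2 (add_nonneg (hκ _) (hκ _)))
  | succ n ih =>
    rw [heatK_succ]
    exact transitionOp_nonneg hκ ih

lemma heatK_hasFiniteSupport (κ : ℤ → ℝ) (n : ℕ) : (heatK κ n).HasFiniteSupport := by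
  induction n with
  | zero =>
    rw [heatK_zero]
    exact (Set.finite_singleton 0).subset Pi.support_single_subset
  | succ n ih =>
    rw [heatK_succ]
    exact transitionOp_hasFiniteSupport ih

lemma weightedInner_heatK_zero (hκ : cbar κ 0 ≠ 0) (f : ℤ → ℝ) :
    weightedInner κ (heatK κ 0) f = f 0 := by
  rw [weightedInner, heatK_zero, tsum_eq_single 0 fun x hx => by simp [hx]]
  simp
  field_simp

lemma weightedInner_heatK (hκ : ∀ x, cbar κ x ≠ 0) (m n : ℕ) :
    weightedInner κ (heatK κ m) (heatK κ n) = heatK κ (m + n) 0 := by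
  induction m generalizing n with
  | zero => rw [weightedInner_heatK_zero (hκ 0), zero_add]
  | succ m ih =>
    rw [heatK_succ, weightedInner_transitionOp_left hκ (heatK_hasFiniteSupport κ m), ← heatK_succ,
      ih, add_right_comm, add_assoc]

lemma weightedInner_heatK_one (hκ : ∀ x, cbar κ x ≠ 0) (n : ℕ) :
    weightedInner κ (heatK κ n) 1 = 1 := by
  induction n with
  | zero => exact weightedInner_heatK_zero (hκ 0) 1
  | succ n ih =>
    rw [heatK_succ, weightedInner_transitionOp_one hκ (heatK_hasFiniteSupport κ n), ih]

lemma energy_eq_weightedInner (κ : ℤ → ℝ) (n : ℕ) :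
    energy κ n = weightedInner κ (heatK κ n) (heatK κ n) := by
  simp only [energy, weightedInner, sq]

lemma energy_eq_heatK (hκ : ∀ x, cbar κ x ≠ 0) (n : ℕ) : energy κ n = heatK κ (2 * n) 0 := by
  rw [energy_eq_weightedInner, weightedInner_heatK hκ, two_mul]

lemma energy_nonneg (hκ : ∀ x, 0 ≤ cbar κ x) (n : ℕ) : 0 ≤ energy κ n := by
  rw [energy_eq_weightedInner]
  exact weightedInner_self_nonneg hκ

lemma dirichletForm_heatK (hκ : ∀ x, cbar κ x ≠ 0) (n : ℕ) :
    dirichletForm κ (heatK κ n) = energy κ n - energy κ (n + 1) := by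
  rw [dirichletForm_eq_weightedInner_sub hκ (heatK_hasFiniteSupport κ n), ← heatK_succ,
    energy_eq_weightedInner, energy_eq_weightedInner]

lemma two_mul_energy_succ_le (hκ : ∀ x, 0 < cbar κ x) (n : ℕ) :
    2 * energy κ (n + 1) ≤ energy κ n + energy κ (n + 2) := by
  have hκ' (x : ℤ) : cbar κ x ≠ 0 := (hκ x).ne'
  have hsub := weightedInner_sub_self (κ := κ)
    (heatK_hasFiniteSupport κ n) (heatK_hasFiniteSupport κ (n + 2))
  have hcross : weightedInner κ (heatK κ n) (heatK κ (n + 2)) = energy κ (n + 1) := by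
    rw [weightedInner_heatK hκ', energy_eq_heatK hκ']
    ring_nf
  rw [hcross, ← energy_eq_weightedInner, ← energy_eq_weightedInner] at hsub
  have hnonneg := weightedInner_self_nonneg (f := heatK κ n - heatK κ (n + 2)) fun x => (hκ x).le
  linarith

lemma dirichletForm_heatK_antitone (hκ : ∀ x, 0 < cbar κ x) :
    Antitone fun n => dirichletForm κ (heatK κ n) := by
  refine antitone_nat_of_succ_le fun n => ?_
  rw [dirichletForm_heatK fun x => (hκ x).ne', dirichletForm_heatK fun x => (hκ x).ne']
  linarith [two_mul_energy_succ_le hκ n]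

lemma mul_dirichletForm_heatK_two_mul_le (hκ : ∀ x, 0 < cbar κ x) (n : ℕ) :
    n * dirichletForm κ (heatK κ (2 * n)) ≤ heatK κ (2 * n) 0 := by
  have hκ' (x : ℤ) : cbar κ x ≠ 0 := (hκ x).ne'
  calc n * dirichletForm κ (heatK κ (2 * n))
      = ∑ _i ∈ Finset.range n, dirichletForm κ (heatK κ (2 * n)) := by simp
    _ ≤ ∑ i ∈ Finset.range n, dirichletForm κ (heatK κ (n + i)) :=
        Finset.sum_le_sum fun i hi =>
          dirichletForm_heatK_antitone hκ (by have := Finset.mem_range.1 hi; lia)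
    _ = energy κ n - energy κ (n + n) := by
        simp only [dirichletForm_heatK hκ']
        exact Finset.sum_range_sub' (fun i => energy κ (n + i)) n
    _ ≤ heatK κ (2 * n) 0 := by
        rw [← energy_eq_heatK hκ']
        exact sub_le_self _ (energy_nonneg (fun x => (hκ x).le) _)

end HeatKernel

section Resistance

variable {κ f : ℤ → ℝ} {C : ℝ}

/-- The resistance between the origin and each site at distance `k` is at most `C * k`. The edges
to the left of the origin are `{-1 - i, -i}`, whose conductances are the `κ (-1 - i)`. -/
structure LinearResistance (κ : ℤ → ℝ) (C : ℝ) : Prop where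
  right (k : ℕ) : ∑ i ∈ Finset.range k, 1 / κ i ≤ C * k
  left (k : ℕ) : ∑ i ∈ Finset.range k, 1 / κ (-1 - i) ≤ C * k

lemma LinearResistance.pos (hC : LinearResistance κ C) (hκ : 0 < κ 0) : 0 < C := by
  have h := hC.right 1
  simp only [Finset.sum_range_one, Nat.cast_zero, Nat.cast_one, mul_one] at h
  exact (one_div_pos.2 hκ).trans_le h

lemma sum_range_two_mul {M : Type*} [AddCommMonoid M] (u : ℕ → M) (k : ℕ) :
    ∑ i ∈ Finset.range (2 * k), u i = ∑ j ∈ Finset.range k, (u (2 * j) + u (2 * j + 1)) := by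
  induction k with
  | zero => simp
  | succ k ih => simp only [mul_add_one, Finset.sum_range_succ, ih, add_assoc]

lemma sum_comp_le_tsum {ι α : Type*} {u : α → ℝ} (hu : Summable u) (hu0 : ∀ a, 0 ≤ u a)
    {t : ι → α} (ht : t.Injective) (s : Finset ι) : ∑ i ∈ s, u (t i) ≤ ∑' a, u a :=
  ((hu.comp_injective ht).sum_le_tsum s fun i _ => hu0 (t i)).trans
    (tsum_comp_le_tsum_of_inj hu hu0 ht)

lemma sum_one_div_seriesConductance (hκ : ∀ x, 0 < κ x) (p : ℤ) (k : ℕ) :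
    ∑ j ∈ Finset.range k, 1 / seriesConductance κ (p + 2 * j + 1) =
      ∑ i ∈ Finset.range (2 * k), 1 / κ (p + i) := by
  rw [sum_range_two_mul]
  refine Finset.sum_congr rfl fun j _ => ?_
  rw [one_div_seriesConductance hκ, add_sub_cancel_right]
  push_cast
  rw [add_assoc]

lemma sum_seriesConductance_mul_sq_le (hκ : ∀ x, 0 < κ x) (hf : f.HasFiniteSupport) (p : ℤ)
    (k : ℕ) :
    ∑ j ∈ Finset.range k,
      seriesConductance κ (p + 2 * j + 1) * (f (p + 2 * (j + 1)) - f (p + 2 * j)) ^ 2 ≤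
        dirichletForm κ f := by
  have hinj : Function.Injective fun j : ℕ => p + 2 * j + 1 := fun i j h => by
    simp only at h
    lia
  refine le_of_eq_of_le (Finset.sum_congr rfl fun j _ => ?_) (sum_comp_le_tsum
    (summable_dirichletForm hf)
    (fun x => mul_nonneg (seriesConductance_pos hκ x).le (sq_nonneg _)) hinj (Finset.range k))
  ring_nf

lemma sq_sub_le_resistance_mul_dirichletForm (hκ : ∀ x, 0 < κ x) (hf : f.HasFiniteSupport) (p : ℤ)
    (k : ℕ) :
    (f (p + 2 * k) - f p) ^ 2 ≤
      (∑ i ∈ Finset.range (2 * k), 1 / κ (p + i)) * dirichletForm κ f := by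
  have hpos (x : ℤ) : 0 < seriesConductance κ x := seriesConductance_pos hκ x
  have htel : f (p + 2 * k) - f p =
      ∑ j ∈ Finset.range k, (f (p + 2 * (j + 1)) - f (p + 2 * j)) := by
    simpa using (Finset.sum_range_sub (fun j : ℕ => f (p + 2 * j)) k).symm
  calc (f (p + 2 * k) - f p) ^ 2
      ≤ (∑ j ∈ Finset.range k, 1 / seriesConductance κ (p + 2 * j + 1)) *
          ∑ j ∈ Finset.range k,
            seriesConductance κ (p + 2 * j + 1) * (f (p + 2 * (j + 1)) - f (p + 2 * j)) ^ 2 := by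
        rw [htel]
        refine Finset.sum_sq_le_sum_mul_sum_of_sq_le_mul _ (fun j _ => (one_div_pos.2 (hpos _)).le)
          (fun j _ => mul_nonneg (hpos _).le (sq_nonneg _)) fun j _ => ?_
        rw [← mul_assoc, one_div_mul_cancel (hpos _).ne', one_mul]
    _ ≤ (∑ i ∈ Finset.range (2 * k), 1 / κ (p + i)) * dirichletForm κ f := by
        rw [sum_one_div_seriesConductance hκ]
        exact mul_le_mul_of_nonneg_left (sum_seriesConductance_mul_sq_le hκ hf p k)
          (Finset.sum_nonneg fun i _ => (one_div_pos.2 (hκ _)).le)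

lemma LinearResistance.sq_sub_le (hC : LinearResistance κ C) (hκ : ∀ x, 0 < κ x)
    (hf : f.HasFiniteSupport) {x : ℤ} (hx : Even x) :
    (f x - f 0) ^ 2 ≤ C * |(x : ℝ)| * dirichletForm κ f := by
  obtain ⟨k, rfl | rfl⟩ : ∃ k : ℕ, x = 2 * k ∨ x = -(2 * k) := ⟨x.natAbs / 2, by grind⟩
  · have h := sq_sub_le_resistance_mul_dirichletForm hκ hf 0 k
    have hright := hC.right (2 * k)
    simp only [zero_add] at h
    grw [h, hright]
    · simp
    · exact dirichletForm_nonneg hκ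
  · have h := sq_sub_le_resistance_mul_dirichletForm hκ hf (-(2 * k)) k
    have hleft := hC.left (2 * k)
    have hreflect : ∑ i ∈ Finset.range (2 * k), 1 / κ (-(2 * k) + i) =
        ∑ i ∈ Finset.range (2 * k), 1 / κ (-1 - i) := by
      rw [← Finset.sum_range_reflect]
      refine Finset.sum_congr rfl fun i hi => ?_
      have := Finset.mem_range.1 hi
      congr 2
      lia
    rw [neg_add_cancel, hreflect] at h
    rw [← neg_sub, neg_sq]
    grw [h, hleft]
    · simp
    · exact dirichletForm_nonneg hκ

lemma sum_range_le_sum_cbar_two_mul (hκ : ∀ x, 0 < κ x) (K : ℕ) :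
    ∑ i ∈ Finset.range K, κ i ≤ ∑ j ∈ Finset.range K, cbar κ (2 * j) := by
  rcases K with _ | k
  · simp
  calc ∑ i ∈ Finset.range (k + 1), κ i
      ≤ ∑ i ∈ Finset.range (2 * k + 1), κ i :=
        Finset.sum_le_sum_of_subset_of_nonneg (Finset.range_subset_range.2 (by lia))
          fun i _ _ => (hκ i).le
    _ ≤ ∑ i ∈ Finset.range (2 * (k + 1)), κ ((i : ℤ) - 1) := by
        rw [mul_add_one, Finset.sum_range_succ' _ (2 * k + 1)]
        simpa using (hκ (-1)).le
    _ = ∑ j ∈ Finset.range (k + 1), cbar κ (2 * j) := by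
        rw [sum_range_two_mul]
        simp [cbar]

lemma mul_sum_range_le_weightedInner_one (hκ : ∀ x, 0 < κ x) (hf : f.HasFiniteSupport)
    (hf0 : 0 ≤ f) {K : ℕ} {m : ℝ} (hm : 0 ≤ m) (hmf : ∀ j < K, m ≤ f (2 * j)) :
    m * ∑ i ∈ Finset.range K, κ i ≤ weightedInner κ f 1 := by
  have hinj : Function.Injective fun j : ℕ => 2 * (j : ℤ) := fun i j h => by
    simp only at h
    lia
  calc m * ∑ i ∈ Finset.range K, κ i
      ≤ m * ∑ j ∈ Finset.range K, cbar κ (2 * j) :=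
        mul_le_mul_of_nonneg_left (sum_range_le_sum_cbar_two_mul hκ K) hm
    _ = ∑ j ∈ Finset.range K, m * cbar κ (2 * j) := Finset.mul_sum ..
    _ ≤ ∑ j ∈ Finset.range K, f (2 * j) * cbar κ (2 * j) :=
        Finset.sum_le_sum fun j hj =>
          mul_le_mul_of_nonneg_right (hmf j (Finset.mem_range.1 hj)) (cbar_pos hκ _).le
    _ ≤ ∑' x, f x * cbar κ x :=
        sum_comp_le_tsum (summable_of_hasFiniteSupport (by fun_prop))
          (fun x => mul_nonneg (hf0 x) (cbar_pos hκ x).le) hinj _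
    _ = weightedInner κ f 1 := by simp [weightedInner]

lemma LinearResistance.apply_zero_le (hC : LinearResistance κ C) (hκ : ∀ x, 0 < κ x)
    (hf : f.HasFiniteSupport) (hf0 : 0 ≤ f) {K : ℕ} (hK : K ≠ 0) :
    f 0 ≤ weightedInner κ f 1 / ∑ i ∈ Finset.range K, κ i +
      √(C * (2 * K) * dirichletForm κ f) := by
  have hD := dirichletForm_nonneg (f := f) hκ
  have hC0 := hC.pos (hκ 0)
  set r := √(C * (2 * K) * dirichletForm κ f)
  have hsum : 0 < ∑ i ∈ Finset.range K, κ i :=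
    Finset.sum_pos (fun i _ => hκ i) (Finset.nonempty_range_iff.2 hK)
  have hfar (j : ℕ) (hj : j < K) : f 0 - r ≤ f (2 * j) := by
    have hsq : (f (2 * j) - f 0) ^ 2 ≤ C * (2 * K) * dirichletForm κ f := by
      refine (hC.sq_sub_le hκ hf (even_two_mul _)).trans ?_
      have : |((2 * j : ℤ) : ℝ)| ≤ 2 * K := by
        rw [abs_of_nonneg (by positivity)]
        exact_mod_cast Nat.mul_le_mul_left 2 hj.le
      gcongr
    linarith [neg_le_of_abs_le (Real.abs_le_sqrt hsq)]
  rw [← sub_le_iff_le_add, le_div_iff₀ hsum]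
  rcases le_total 0 (f 0 - r) with h | h
  · exact mul_sum_range_le_weightedInner_one hκ hf hf0 h hfar
  · exact (mul_nonpos_of_nonpos_of_nonneg h hsum.le).trans
      (tsum_nonneg fun x => mul_nonneg (mul_nonneg (hf0 x) zero_le_one) (cbar_pos hκ x).le)

lemma LinearResistance.natCast_le_mul_sum (hC : LinearResistance κ C) (hκ : ∀ x, 0 < κ x) (K : ℕ) :
    (K : ℝ) ≤ C * ∑ i ∈ Finset.range K, κ i := by
  rcases K.eq_zero_or_pos with rfl | hK
  · simp
  have hsum : 0 ≤ ∑ i ∈ Finset.range K, κ i := Finset.sum_nonneg fun i _ => (hκ i).le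
  have hcs : (K : ℝ) * K ≤ C * (∑ i ∈ Finset.range K, κ i) * K := by
    calc (K : ℝ) * K = (∑ i ∈ Finset.range K, 1) ^ 2 := by simp [sq]
      _ ≤ (∑ i ∈ Finset.range K, κ i) * ∑ i ∈ Finset.range K, 1 / κ i :=
          Finset.sum_sq_le_sum_mul_sum_of_sq_le_mul _ (fun i _ => (hκ i).le)
            (fun i _ => (one_div_pos.2 (hκ i)).le) fun i _ => by
              rw [mul_one_div_cancel (hκ i).ne', one_pow]
      _ ≤ (∑ i ∈ Finset.range K, κ i) * (C * K) := mul_le_mul_of_nonneg_left (hC.right K) hsum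
      _ = C * (∑ i ∈ Finset.range K, κ i) * K := by ring
  exact le_of_mul_le_mul_right hcs (Nat.cast_pos.2 hK)

end Resistance

section HeatKernelBound

open scoped Topology

variable {κ : ℤ → ℝ} {C : ℝ}

lemma LinearResistance.sqrt_mul_heatK_zero_le_add (hC : LinearResistance κ C)
    (hκ : ∀ x, 0 < κ x) {n K : ℕ} (hn : n ≠ 0) (hK : K ≠ 0) :
    √(2 * n) * heatK κ (2 * n) 0 ≤
      2 * (√(2 * n) / ∑ i ∈ Finset.range K, κ i) + 4 * C * (K / √(2 * n)) := by
  have hn0 : (0 : ℝ) < n := by positivity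
  have hC0 := hC.pos (hκ 0)
  have hbound := hC.apply_zero_le hκ (heatK_hasFiniteSupport κ (2 * n))
    (heatK_nonneg (fun x => (hκ x).le) _) hK
  rw [weightedInner_heatK_one fun x => cbar_ne_zero hκ x] at hbound
  have hdir : dirichletForm κ (heatK κ (2 * n)) ≤ heatK κ (2 * n) 0 / n := by
    rw [le_div_iff₀' hn0]
    exact mul_dirichletForm_heatK_two_mul_le (cbar_pos hκ) n
  have hnonneg : 0 ≤ heatK κ (2 * n) 0 := heatK_nonneg (fun x => (hκ x).le) _ 0
  set h := heatK κ (2 * n) 0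
  -- AM-GM: `√(4 * a * b) ≤ a + b` with `a = h / 2` and `b = C * K / n`.
  have hamgm : √(C * (2 * K) * dirichletForm κ (heatK κ (2 * n))) ≤ h / 2 + C * K / n := by
    refine Real.sqrt_le_iff.2 ⟨by positivity, ?_⟩
    calc C * (2 * K) * dirichletForm κ (heatK κ (2 * n)) ≤ C * (2 * K) * (h / n) := by gcongr
      _ = 4 * (h / 2) * (C * K / n) := by ring
      _ ≤ (h / 2 + C * K / n) ^ 2 := four_mul_le_sq_add ..
  calc √(2 * n) * h
      ≤ √(2 * n) * (2 * (1 / ∑ i ∈ Finset.range K, κ i) + 2 * (C * K / n)) := by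
        gcongr
        linarith
    _ = 2 * (√(2 * n) / ∑ i ∈ Finset.range K, κ i) + 4 * C * (K * (√(2 * n) / (2 * n))) := by
        ring
    _ = 2 * (√(2 * n) / ∑ i ∈ Finset.range K, κ i) + 4 * C * (K / √(2 * n)) := by
        rw [Real.sqrt_div_self', mul_one_div]

lemma LinearResistance.sqrt_mul_heatK_zero_le (hC : LinearResistance κ C) (hκ : ∀ x, 0 < κ x)
    (n : ℕ) : √(2 * n) * heatK κ (2 * n) 0 ≤ 10 * C := by
  have hC0 := hC.pos (hκ 0)
  rcases eq_or_ne n 0 with rfl | hn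
  · simpa using hC0.le
  have hs : 1 ≤ √(2 * n : ℝ) := by
    rw [Real.one_le_sqrt]
    exact_mod_cast (by lia : 1 ≤ 2 * n)
  set s := √(2 * n : ℝ)
  have hK : ⌈s⌉₊ ≠ 0 := (Nat.ceil_pos.2 (by positivity)).ne'
  have hsum : 0 < ∑ i ∈ Finset.range ⌈s⌉₊, κ i :=
    Finset.sum_pos (fun i _ => hκ i) (Finset.nonempty_range_iff.2 hK)
  have hconductance : s / ∑ i ∈ Finset.range ⌈s⌉₊, κ i ≤ C :=
    (div_le_iff₀ hsum).2 ((Nat.le_ceil s).trans (hC.natCast_le_mul_sum hκ _))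
  have hceil : ⌈s⌉₊ / s ≤ 2 := by
    rw [div_le_iff₀ (by positivity)]
    linarith [Nat.ceil_lt_add_one (zero_le_one.trans hs)]
  calc s * heatK κ (2 * n) 0
      ≤ 2 * (s / ∑ i ∈ Finset.range ⌈s⌉₊, κ i) + 4 * C * (⌈s⌉₊ / s) :=
        hC.sqrt_mul_heatK_zero_le_add hκ hn hK
    _ ≤ 2 * C + 4 * C * 2 := by gcongr
    _ = 10 * C := by ring

lemma LinearResistance.sqrt_mul_heatK_le (hC : LinearResistance κ C) (hκ : ∀ x, 0 < κ x) {n : ℕ}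
    {x : ℤ} (hx : Even x) (hxn : |(x : ℝ)| < √(2 * n)) :
    √(2 * n) * heatK κ (2 * n) x ≤
      √(2 * n) * heatK κ (2 * n) 0 + √(2 * C * (√(2 * n) * heatK κ (2 * n) 0)) := by
  have hC0 := hC.pos (hκ 0)
  have hD := dirichletForm_nonneg (f := heatK κ (2 * n)) hκ
  have hsq : (√(2 * n) * (heatK κ (2 * n) x - heatK κ (2 * n) 0)) ^ 2 ≤
      2 * C * (√(2 * n) * heatK κ (2 * n) 0) := by
    calc (√(2 * n) * (heatK κ (2 * n) x - heatK κ (2 * n) 0)) ^ 2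
        = 2 * n * (heatK κ (2 * n) x - heatK κ (2 * n) 0) ^ 2 := by
          rw [mul_pow, Real.sq_sqrt (by positivity)]
      _ ≤ 2 * n * (C * √(2 * n) * dirichletForm κ (heatK κ (2 * n))) := by
          grw [hC.sq_sub_le hκ (heatK_hasFiniteSupport κ (2 * n)) hx, hxn]
      _ = 2 * C * √(2 * n) * (n * dirichletForm κ (heatK κ (2 * n))) := by ring
      _ ≤ 2 * C * √(2 * n) * heatK κ (2 * n) 0 := by
          grw [mul_dirichletForm_heatK_two_mul_le (cbar_pos hκ) n]
      _ = 2 * C * (√(2 * n) * heatK κ (2 * n) 0) := by ring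
  linarith [Real.le_sqrt_of_sq_le hsq]

lemma LinearResistance.exists_sqrt_mul_heatK_le (hC : LinearResistance κ C)
    (hκ : ∀ x, 0 < κ x) :
    ∃ M : ℝ, ∀ n : ℕ, ∀ x : ℤ, Even x → |(x : ℝ)| < √(2 * n) →
      √(2 * n) * heatK κ (2 * n) x ≤ M := by
  have hC0 := hC.pos (hκ 0)
  refine ⟨10 * C + √(2 * C * (10 * C)), fun n x hx hxn => ?_⟩
  grw [hC.sqrt_mul_heatK_le hκ hx hxn, hC.sqrt_mul_heatK_zero_le hκ n]

lemma tendsto_sqrt_two_mul_atTop : Tendsto (fun n : ℕ => √(2 * n : ℝ)) atTop atTop :=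
  Real.tendsto_sqrt_atTop.comp (tendsto_natCast_atTop_atTop.const_mul_atTop two_pos)

lemma tendsto_div_sum_ceil_mul
    (hW : Tendsto (fun K : ℕ => (∑ i ∈ Finset.range K, κ i) / K) atTop atTop) {δ : ℝ} (hδ : 0 < δ) :
    Tendsto (fun s : ℝ => s / ∑ i ∈ Finset.range ⌈δ * s⌉₊, κ i) atTop (𝓝 0) := by
  have hceil := (tendsto_nat_ceil_mul_div_atTop hδ.le).inv₀ hδ.ne'
  have hK : Tendsto (fun s : ℝ => ⌈δ * s⌉₊) atTop atTop :=
    tendsto_nat_ceil_atTop.comp (tendsto_id.const_mul_atTop hδ)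
  have hmul := hceil.mul (hW.comp hK).inv_tendsto_atTop
  rw [mul_zero] at hmul
  refine hmul.congr' ?_
  filter_upwards [hK.eventually_ne_atTop 0] with s hs
  have : (⌈δ * s⌉₊ : ℝ) ≠ 0 := Nat.cast_ne_zero.2 hs
  simp only [Pi.inv_apply, Function.comp_apply, inv_div]
  rw [div_mul_div_cancel₀ this]

lemma LinearResistance.tendsto_sqrt_mul_heatK_zero (hC : LinearResistance κ C)
    (hκ : ∀ x, 0 < κ x)
    (hW : Tendsto (fun K : ℕ => (∑ i ∈ Finset.range K, κ i) / K) atTop atTop) :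
    Tendsto (fun n : ℕ => √(2 * n) * heatK κ (2 * n) 0) atTop (𝓝 0) := by
  have hC0 := hC.pos (hκ 0)
  refine tendsto_order.2 ⟨fun ε hε => .of_forall fun n => hε.trans_le <|
    mul_nonneg (Real.sqrt_nonneg _) (heatK_nonneg (fun x => (hκ x).le) _ 0), fun ε hε => ?_⟩
  obtain ⟨δ, hδ, hδε⟩ : ∃ δ > 0, 2 * 0 + 4 * C * δ < ε :=
    ⟨ε / (8 * C), by positivity, by field_simp; linarith⟩
  have hbound := (((tendsto_div_sum_ceil_mul hW hδ).const_mul 2).add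
    ((tendsto_nat_ceil_mul_div_atTop hδ.le).const_mul (4 * C))).comp tendsto_sqrt_two_mul_atTop
  filter_upwards [hbound.eventually_lt_const hδε, eventually_ne_atTop 0] with n hn hn0
  refine (hC.sqrt_mul_heatK_zero_le_add hκ hn0 (Nat.ceil_pos.2 ?_).ne').trans_lt hn
  positivity

lemma LinearResistance.eventually_sqrt_mul_heatK_lt (hC : LinearResistance κ C)
    (hκ : ∀ x, 0 < κ x)
    (hW : Tendsto (fun K : ℕ => (∑ i ∈ Finset.range K, κ i) / K) atTop atTop)
    {ε : ℝ} (hε : 0 < ε) :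
    ∀ᶠ n : ℕ in atTop, ∀ x : ℤ, Even x → |(x : ℝ)| < √(2 * n) →
      √(2 * n) * heatK κ (2 * n) x < ε := by
  have hcont : Continuous fun t : ℝ => t + √(2 * C * t) := by fun_prop
  have hlim := (hcont.tendsto' 0 0 (by simp)).comp (hC.tendsto_sqrt_mul_heatK_zero hκ hW)
  filter_upwards [hlim.eventually_lt_const hε] with n hn x hx hxn
  exact (hC.sqrt_mul_heatK_le hκ hx hxn).trans_lt hn

end HeatKernelBound

section MaximalErgodicTheorem

variable {α : Type*} {T : α → α} {f : α → ℝ}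

/-- The maximum `max {S_0, …, S_n}` of the first Birkhoff sums `S_k = f + f ∘ T + ⋯ + f ∘ T^[k-1]`,
where `S_0 = 0`, used in Garsia's proof of the maximal ergodic theorem. -/
noncomputable def birkhoffMax (T : α → α) (f : α → ℝ) (n : ℕ) (ω : α) : ℝ :=
  partialSups (fun k => birkhoffSum T f k ω) n

lemma birkhoffMax_mono (ω : α) : Monotone fun n => birkhoffMax T f n ω :=
  partialSups_monotone _

lemma birkhoffMax_zero : birkhoffMax T f 0 = 0 := by
  ext ω
  simp [birkhoffMax]

lemma birkhoffMax_nonneg (n : ℕ) (ω : α) : 0 ≤ birkhoffMax T f n ω :=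
  birkhoffSum_zero T f ω ▸ le_partialSups_of_le (fun k => birkhoffSum T f k ω) n.zero_le

lemma birkhoffMax_succ (n : ℕ) (ω : α) :
    birkhoffMax T f (n + 1) ω = 0 ⊔ (f ω + birkhoffMax T f n (T ω)) := by
  simp only [birkhoffMax, partialSups_add_one', Function.comp_def, birkhoffSum_succ',
    partialSups_const_add, Nat.bot_eq_zero, birkhoffSum_zero]

lemma birkhoffMax_pos_iff {n : ℕ} {ω : α} :
    0 < birkhoffMax T f n ω ↔ ∃ k ≤ n, 0 < birkhoffSum T f k ω := by
  rw [← not_le, birkhoffMax, partialSups_le_iff]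
  push Not
  rfl

lemma birkhoffMax_le (n : ℕ) (ω : α) :
    birkhoffMax T f n ω ≤
      {ω | 0 < birkhoffMax T f n ω}.indicator f ω + birkhoffMax T f n (T ω) := by
  by_cases hω : 0 < birkhoffMax T f n ω
  · rcases n with _ | n
    · simp [birkhoffMax_zero] at hω
    · have hsucc := birkhoffMax_succ (T := T) (f := f) n ω
      have hpos : 0 < f ω + birkhoffMax T f n (T ω) := by
        simpa only [hsucc, lt_sup_iff, lt_self_iff_false, false_or] using hω
      rw [Set.indicator_of_mem (by exact hω), hsucc, sup_of_le_right hpos.le]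
      gcongr
      exact birkhoffMax_mono (T ω) n.le_succ
  · rw [Set.indicator_of_notMem (by simpa using hω), zero_add]
    exact (not_lt.1 hω).trans (birkhoffMax_nonneg n _)

variable [MeasurableSpace α] {μ : Measure α}

lemma integrable_birkhoffMax (hT : MeasurePreserving T μ μ) (hf : Integrable f μ) (n : ℕ) :
    Integrable (birkhoffMax T f n) μ := by
  induction n with
  | zero => simp [birkhoffMax_zero]
  | succ n ih =>
    have := (integrable_zero α ℝ μ).sup (hf.add (hT.integrable_comp_of_integrable ih))
    exact this.congr (.of_forall fun ω => (birkhoffMax_succ n ω).symm)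

lemma nullMeasurableSet_birkhoffMax_pos (hT : MeasurePreserving T μ μ) (hf : Integrable f μ)
    (n : ℕ) : NullMeasurableSet {ω | 0 < birkhoffMax T f n ω} μ :=
  nullMeasurableSet_lt aemeasurable_const (integrable_birkhoffMax hT hf n).aemeasurable

lemma setIntegral_birkhoffMax_pos_nonneg (hT : MeasurePreserving T μ μ) (hf : Integrable f μ)
    (n : ℕ) : 0 ≤ ∫ ω in {ω | 0 < birkhoffMax T f n ω}, f ω ∂μ := by
  have hS := nullMeasurableSet_birkhoffMax_pos hT hf n
  have hM := integrable_birkhoffMax hT hf n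
  have hMT : Integrable (fun ω => birkhoffMax T f n (T ω)) μ := hT.integrable_comp_of_integrable hM
  have hinv : ∫ ω, birkhoffMax T f n (T ω) ∂μ = ∫ ω, birkhoffMax T f n ω ∂μ := by
    have hmap := integral_map hT.aemeasurable (hT.map_eq.symm ▸ hM.aestronglyMeasurable)
    rwa [hT.map_eq, eq_comm] at hmap
  have hle := integral_mono hM ((hf.indicator₀ hS).add hMT) (birkhoffMax_le n)
  simp only [Pi.add_apply] at hle
  rw [integral_add (hf.indicator₀ hS) hMT, integral_indicator₀ hS, hinv] at hle
  linarith

lemma setIntegral_exists_birkhoffSum_pos_nonneg (hT : MeasurePreserving T μ μ)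
    (hf : Integrable f μ) : 0 ≤ ∫ ω in {ω | ∃ n, 0 < birkhoffSum T f n ω}, f ω ∂μ := by
  have hUnion : {ω | ∃ n, 0 < birkhoffSum T f n ω} = ⋃ n, {ω | 0 < birkhoffMax T f n ω} := by
    ext ω
    simp only [Set.mem_ofPred_eq, Set.mem_iUnion, birkhoffMax_pos_iff]
    exact ⟨fun ⟨n, hn⟩ => ⟨n, n, le_rfl, hn⟩, fun ⟨_, k, _, hk⟩ => ⟨k, hk⟩⟩
  have hmono : Monotone fun n => {ω | 0 < birkhoffMax T f n ω} :=
    fun _ _ hmn ω (hω : 0 < _) => hω.trans_le (birkhoffMax_mono ω hmn)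
  rw [hUnion]
  exact ge_of_tendsto' (tendsto_setIntegral_of_monotone₀
    (nullMeasurableSet_birkhoffMax_pos hT hf) hmono hf.integrableOn)
    (setIntegral_birkhoffMax_pos_nonneg hT hf)

end MaximalErgodicTheorem

section ErgodicLinearGrowth

variable {α : Type*} {T : α → α} {f : α → ℝ}

lemma bddAbove_range_birkhoffSum_apply_iff {ω : α} :
    BddAbove (Set.range fun n => birkhoffSum T f n (T ω)) ↔
      BddAbove (Set.range fun n => birkhoffSum T f n ω) := by
  simp only [bddAbove_def, Set.forall_mem_range]
  constructor
  · rintro ⟨M, hM⟩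
    refine ⟨0 ⊔ (f ω + M), fun n => ?_⟩
    rcases n with _ | n
    · simp
    · rw [birkhoffSum_succ']
      exact le_sup_of_le_right (add_le_add_right (hM n) _)
  · rintro ⟨M, hM⟩
    refine ⟨M - f ω, fun n => ?_⟩
    rw [le_sub_iff_add_le', ← birkhoffSum_succ']
    exact hM (n + 1)

variable [MeasurableSpace α] {μ : Measure α}

lemma measurable_birkhoffSum (hT : Measurable T) (hf : Measurable f) (n : ℕ) :
    Measurable (birkhoffSum T f n) :=
  Finset.measurable_fun_sum _ fun i _ => hf.comp (hT.iterate i)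

lemma ae_bddAbove_range_birkhoffSum (hT : Ergodic T μ) (hfm : Measurable f) (hf : Integrable f μ)
    (hneg : ∫ ω, f ω ∂μ < 0) :
    ∀ᵐ ω ∂μ, BddAbove (Set.range fun n => birkhoffSum T f n ω) := by
  have hB : MeasurableSet {ω | BddAbove (Set.range fun n => birkhoffSum T f n ω)} :=
    measurableSet_bddAbove_range (measurable_birkhoffSum hT.measurable hfm)
  refine (hT.toPreErgodic.ae_mem_or_ae_notMem hB
    (Set.ext fun ω => bddAbove_range_birkhoffSum_apply_iff)).resolve_right fun hunbdd => ?_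
  have huniv : {ω | ∃ n, 0 < birkhoffSum T f n ω} =ᵐ[μ] Set.univ := by
    rw [eventuallyEq_univ]
    filter_upwards [hunbdd] with ω hω
    by_contra! hle
    exact hω ⟨0, Set.forall_mem_range.2 hle⟩
  have hnonneg := setIntegral_exists_birkhoffSum_pos_nonneg hT.toMeasurePreserving hf
  rw [setIntegral_congr_set huniv, setIntegral_univ] at hnonneg
  exact hneg.not_ge hnonneg

lemma ae_exists_birkhoffSum_le_mul_add [IsProbabilityMeasure μ] (hT : Ergodic T μ)
    (hfm : Measurable f) (hf : Integrable f μ) {C : ℝ} (hC : ∫ ω, f ω ∂μ < C) :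
    ∀ᵐ ω ∂μ, ∃ M, ∀ n : ℕ, birkhoffSum T f n ω ≤ C * n + M := by
  have hneg : ∫ ω, (f ω - C) ∂μ < 0 := by
    rw [integral_sub hf (integrable_const C)]
    simpa using hC
  filter_upwards [ae_bddAbove_range_birkhoffSum hT (hfm.sub_const C)
    (hf.sub (integrable_const C)) hneg] with ω hω
  obtain ⟨M, hM⟩ := hω
  refine ⟨M, fun n => ?_⟩
  have hn := hM ⟨n, rfl⟩
  simp only [birkhoffSum, Finset.sum_sub_distrib, Finset.sum_const, Finset.card_range,
    nsmul_eq_mul] at hn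
  rw [birkhoffSum]
  linarith

lemma ae_exists_birkhoffSum_le_mul [IsProbabilityMeasure μ] (hT : Ergodic T μ)
    (hfm : Measurable f) (hf : Integrable f μ) :
    ∀ᵐ ω ∂μ, ∃ C, ∀ n : ℕ, birkhoffSum T f n ω ≤ C * n := by
  filter_upwards [ae_exists_birkhoffSum_le_mul_add hT hfm hf (lt_add_one _)] with ω hω
  obtain ⟨M, hM⟩ := hω
  refine ⟨∫ ω, f ω ∂μ + 1 + |M|, fun n => ?_⟩
  rcases n.eq_zero_or_pos with rfl | hn
  · simp
  · have hn1 : (1 : ℝ) ≤ n := Nat.one_le_cast.2 hn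
    have hMn : M ≤ |M| * n := (le_abs_self M).trans (le_mul_of_one_le_right (abs_nonneg M) hn1)
    linarith [hM n]

lemma exists_lt_integral_min_natCast [IsFiniteMeasure μ] (hfm : Measurable f) (hf0 : 0 ≤ f)
    (htop : ∫⁻ ω, ENNReal.ofReal (f ω) ∂μ = ⊤) (A : ℝ) :
    ∃ m : ℕ, Integrable (fun ω => min (f ω) m) μ ∧ A < ∫ ω, min (f ω) m ∂μ := by
  have hnonneg (m : ℕ) (ω : α) : 0 ≤ min (f ω) m := le_min (hf0 ω) m.cast_nonneg
  have hint (m : ℕ) : Integrable (fun ω => min (f ω) m) μ :=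
    .of_bound (hfm.min measurable_const).aestronglyMeasurable m <| .of_forall fun ω => by
      rw [Real.norm_of_nonneg (hnonneg m ω)]
      exact min_le_right _ _
  have hsup (ω : α) : ENNReal.ofReal (f ω) = ⨆ m : ℕ, ENNReal.ofReal (min (f ω) m) := by
    refine le_antisymm ?_ (iSup_le fun m => ENNReal.ofReal_le_ofReal (min_le_left _ _))
    obtain ⟨m, hm⟩ := exists_nat_ge (f ω)
    exact le_iSup_of_le m (ENNReal.ofReal_le_ofReal (min_eq_left hm).ge)
  simp only [hsup] at htop
  rw [lintegral_iSup (fun m => (hfm.min measurable_const).ennreal_ofReal) fun m n hmn ω =>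
    ENNReal.ofReal_le_ofReal (min_le_min_left _ (Nat.cast_le.2 hmn))] at htop
  obtain ⟨m, hm⟩ := lt_iSup_iff.1 (ENNReal.ofReal_lt_top.trans_eq htop.symm)
  rw [← ofReal_integral_eq_lintegral_ofReal (hint m) (.of_forall (hnonneg m))] at hm
  exact ⟨m, hint m, (ENNReal.ofReal_lt_ofReal_iff'.1 hm).1⟩

lemma ae_exists_mul_sub_le_birkhoffSum [IsProbabilityMeasure μ] (hT : Ergodic T μ)
    (hfm : Measurable f) (hf0 : 0 ≤ f) (htop : ∫⁻ ω, ENNReal.ofReal (f ω) ∂μ = ⊤) (A : ℝ) :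
    ∀ᵐ ω ∂μ, ∃ M, ∀ n : ℕ, A * n - M ≤ birkhoffSum T f n ω := by
  obtain ⟨m, hint, hm⟩ := exists_lt_integral_min_natCast hfm hf0 htop A
  have hneg : ∫ ω, -min (f ω) m ∂μ < -A := by rwa [integral_neg, neg_lt_neg_iff]
  filter_upwards [ae_exists_birkhoffSum_le_mul_add hT (hfm.min measurable_const).neg hint.neg
    hneg] with ω hω
  obtain ⟨M, hM⟩ := hω
  refine ⟨M, fun n => ?_⟩
  calc A * n - M ≤ ∑ i ∈ Finset.range n, min (f (T^[i] ω)) m := by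
        have hn := hM n
        simp only [birkhoffSum, Pi.neg_apply, Finset.sum_neg_distrib] at hn
        linarith
    _ ≤ birkhoffSum T f n ω := Finset.sum_le_sum fun i _ => min_le_left _ _

lemma ae_tendsto_birkhoffSum_div_atTop [IsProbabilityMeasure μ] (hT : Ergodic T μ)
    (hfm : Measurable f) (hf0 : 0 ≤ f) (htop : ∫⁻ ω, ENNReal.ofReal (f ω) ∂μ = ⊤) :
    ∀ᵐ ω ∂μ, Tendsto (fun n : ℕ => birkhoffSum T f n ω / n) atTop atTop := by
  filter_upwards [ae_all_iff.2 fun A : ℕ =>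
    ae_exists_mul_sub_le_birkhoffSum hT hfm hf0 htop A] with ω hω
  refine tendsto_atTop.2 fun b => ?_
  obtain ⟨A, hA⟩ := exists_nat_gt b
  obtain ⟨M, hM⟩ := hω A
  have hlim : Tendsto (fun n : ℕ => A - M / n) atTop (nhds (A - 0 : ℝ)) :=
    tendsto_const_nhds.sub (tendsto_const_div_atTop_nhds_zero_nat M)
  rw [sub_zero] at hlim
  filter_upwards [hlim.eventually_const_lt hA, eventually_gt_atTop 0] with n hn hn0
  have hn0' : (0 : ℝ) < n := Nat.cast_pos.2 hn0
  refine hn.le.trans ((le_div_iff₀ hn0').2 ?_)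
  rw [sub_mul, div_mul_cancel₀ _ hn0'.ne']
  exact hM n

end ErgodicLinearGrowth

section Environment

variable {Ω : Type*}

lemma envC_natCast (T : Equiv.Perm Ω) (c : Ω → ℝ) (ω : Ω) (i : ℕ) :
    envC T c ω i = c (T^[i] ω) := by
  rw [envC, zpow_natCast, Equiv.Perm.iterate_eq_pow]

lemma envC_neg_one_sub_natCast (T : Equiv.Perm Ω) (c : Ω → ℝ) (ω : Ω) (i : ℕ) :
    envC T c ω (-1 - i) = c (T.symm (T.symm^[i] ω)) := by
  rw [envC, ← neg_add', ← Nat.cast_one, ← Nat.cast_add, zpow_neg, zpow_natCast, ← inv_pow,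
    pow_add, pow_one, Equiv.Perm.mul_apply, Equiv.Perm.iterate_eq_pow]
  rfl

variable [MeasurableSpace Ω] {μ : Measure Ω} {T : Equiv.Perm Ω} {c : Ω → ℝ}

lemma ergodic_perm_symm (hT : Ergodic T μ) (hTsymm : Measurable T.symm) : Ergodic T.symm μ :=
  Ergodic.symm (e := ⟨T, hT.measurable, hTsymm⟩) hT

lemma ae_exists_linearResistance [IsProbabilityMeasure μ] (hT : Ergodic T μ)
    (hTsymm : Measurable T.symm) (hc : Measurable c) (hres : Integrable (fun ω => 1 / c ω) μ) :
    ∀ᵐ ω ∂μ, ∃ C, LinearResistance (envC T c ω) C := by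
  have hTsymm' := ergodic_perm_symm hT hTsymm
  have hr : Measurable fun ω => 1 / c ω := by fun_prop
  filter_upwards [ae_exists_birkhoffSum_le_mul hT hr hres,
    ae_exists_birkhoffSum_le_mul hTsymm' (hr.comp hTsymm)
      (hTsymm'.toMeasurePreserving.integrable_comp_of_integrable hres)] with ω hright hleft
  obtain ⟨C₁, hC₁⟩ := hright
  obtain ⟨C₂, hC₂⟩ := hleft
  refine ⟨C₁ ⊔ C₂, fun k => ?_, fun k => ?_⟩
  · simp only [envC_natCast]
    exact (hC₁ k).trans (mul_le_mul_of_nonneg_right le_sup_left k.cast_nonneg)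
  · simp only [envC_neg_one_sub_natCast]
    exact (hC₂ k).trans (mul_le_mul_of_nonneg_right le_sup_right k.cast_nonneg)

lemma ae_tendsto_sum_envC_div_atTop [IsProbabilityMeasure μ] (hT : Ergodic T μ)
    (hc : Measurable c) (hc0 : 0 ≤ c) (htop : ∫⁻ ω, ENNReal.ofReal (c ω) ∂μ = ⊤) :
    ∀ᵐ ω ∂μ, Tendsto (fun K : ℕ => (∑ i ∈ Finset.range K, envC T c ω i) / K) atTop atTop := by
  simpa only [envC_natCast, birkhoffSum] using ae_tendsto_birkhoffSum_div_atTop hT hc hc0 htop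

lemma lintegral_ofReal_comp_add_le {S : Ω → Ω} (hS : MeasurePreserving S μ μ)
    (hc : Measurable c) :
    ∫⁻ ω, ENNReal.ofReal (c (S ω) + c ω) ∂μ ≤ 2 * ∫⁻ ω, ENNReal.ofReal (c ω) ∂μ := by
  calc ∫⁻ ω, ENNReal.ofReal (c (S ω) + c ω) ∂μ
      ≤ ∫⁻ ω, ENNReal.ofReal (c (S ω)) + ENNReal.ofReal (c ω) ∂μ :=
        lintegral_mono fun ω => ENNReal.ofReal_add_le
    _ = 2 * ∫⁻ ω, ENNReal.ofReal (c ω) ∂μ := by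
        rw [lintegral_add_right _ hc.ennreal_ofReal, hS.lintegral_comp hc.ennreal_ofReal, two_mul]

end Environment

/-- Uniform off-diagonal bound: a.s. the sequence
`√(2n)·max_{x∈B(0,√(2n))∩2ℤ} P_0^ω[S_{2n}=x]/c̄(x)` is bounded in `n`, and it
converges to `0` when moreover `∫c̄ dμ = ∞`. -/
theorem uniform_heat_kernel_bound {Ω : Type*} [MeasurableSpace Ω]
    (μ : Measure Ω) [IsProbabilityMeasure μ]
    (T : Equiv.Perm Ω) (hT : Ergodic T μ)
    (hTsymm : MeasurePreserving T.symm μ μ)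
    (c : Ω → ℝ) (hc : Measurable c) (hcpos : ∀ ω, 0 < c ω)
    (hres : Integrable (fun ω => 1 / c ω) μ) :
    (∀ᵐ ω ∂μ, ∃ M : ℝ, ∀ n : ℕ, ∀ x : ℤ, Even x →
      |(x : ℝ)| < Real.sqrt (2 * n) →
        Real.sqrt (2 * n) * heatK (envC T c ω) (2 * n) x ≤ M)
    ∧ ((∫⁻ ω, ENNReal.ofReal (c (T.symm ω) + c ω) ∂μ = ⊤) →
        ∀ᵐ ω ∂μ, ∀ ε : ℝ, 0 < ε → ∃ N : ℕ, ∀ n : ℕ, N ≤ n →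
          ∀ x : ℤ, Even x → |(x : ℝ)| < Real.sqrt (2 * n) →
            Real.sqrt (2 * n) * heatK (envC T c ω) (2 * n) x < ε) := by
  have hκ (ω : Ω) (x : ℤ) : 0 < envC T c ω x := hcpos _
  have hlin := ae_exists_linearResistance hT hTsymm.measurable hc hres
  refine ⟨?_, fun htop => ?_⟩
  · filter_upwards [hlin] with ω ⟨C, hC⟩
    exact hC.exists_sqrt_mul_heatK_le (hκ ω)
  · have htop_c : ∫⁻ ω, ENNReal.ofReal (c ω) ∂μ = ⊤ := by
      have h := lintegral_ofReal_comp_add_le hTsymm hc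
      rw [htop, top_le_iff] at h
      exact (ENNReal.mul_eq_top.1 h).elim And.right (absurd · (by simp))
    filter_upwards [hlin, ae_tendsto_sum_envC_div_atTop hT hc (fun ω => (hcpos ω).le) htop_c]
      with ω ⟨C, hC⟩ hW ε hε
    exact eventually_atTop.1 (hC.eventually_sqrt_mul_heatK_lt (hκ ω) hW hε)
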